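/- Let k be a positive integer, let s₁, …, s_k be positive integers with 1/s₁ + 1/s₂ + ⋯ + 1/s_k < 1, let m = lcm(s₁, s₂, …, s_k), let r be the positive integer with 1/s₁ + 1/s₂ + ⋯ + 1/s_k = r/m, and let N be a positive integer. Then there exists a nonnegative integer x such that sᵢ divides N + x for every i and (N+x)/s₁ + (N+x)/s₂ + ⋯ + (N+x)/s_k = N, if and only if r divides N. -/

import Mathlib

/-! Every share is whole exactly when `m ∣ N + x`, and the shares sum to `(N + x) * r / m`. Writing
`N + x = m * t`, the loan equation becomes `N = r * t`; conversely `N = r * t` determines the loan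
`x = (m - r) * t`, which is a natural number because `r / m < 1`. -/

/-- Given `1/s₁ + ⋯ + 1/s_k = r/m < 1` with `m = lcm(s₁,…,s_k)`, the guru's trick
works for a herd of `N` elephants—i.e. there is a nonnegative integer loan `x` with
each `sᵢ` dividing `N + x` and the shares `(N+x)/sᵢ` summing to `N`—if and only if
`r` divides `N`. -/
theorem eighteenth_elephant_iff
    (k : ℕ) (hk : 0 < k) (s : Fin k → ℕ) (hs : ∀ i, 0 < s i)
    (hlt : ∑ i, (1 : ℚ) / (s i : ℚ) < 1)
    (m : ℕ) (hm : m = Finset.univ.lcm s)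
    (r : ℕ) (hr : 0 < r)
    (hrm : ∑ i, (1 : ℚ) / (s i : ℚ) = (r : ℚ) / (m : ℚ))
    (N : ℕ) (hN : 0 < N) :
    (∃ x : ℕ, (∀ i, s i ∣ N + x) ∧
      ∑ i, ((N : ℚ) + (x : ℚ)) / (s i : ℚ) = (N : ℚ)) ↔ r ∣ N := by
  have hm0 : m ≠ 0 := by
    rw [hm, Ne, Finset.lcm_eq_zero_iff]
    rintro ⟨i, -, hi⟩
    exact (hs i).ne' hi
  have hmQ : (m : ℚ) ≠ 0 := by exact_mod_cast hm0
  have hrm_lt : r < m := by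
    rw [hrm, div_lt_one (by positivity)] at hlt
    exact_mod_cast hlt
  have hsum (x : ℕ) : ∑ i, ((N : ℚ) + (x : ℚ)) / (s i : ℚ) = ((N : ℚ) + x) * (r / m) := by
    rw [← hrm, Finset.mul_sum]
    simp only [mul_one_div]
  have hdvd (x : ℕ) : (∀ i, s i ∣ N + x) ↔ m ∣ N + x := by
    rw [hm, Finset.lcm_dvd_iff]
    simp
  simp only [hsum, hdvd]
  constructor
  · rintro ⟨x, ⟨t, ht⟩, hx⟩
    have htQ : (N : ℚ) + x = m * t := by exact_mod_cast ht
    refine ⟨t, ?_⟩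
    rw [htQ] at hx
    field_simp at hx
    have hx' : t * r = N := by exact_mod_cast hx
    rw [← hx', mul_comm]
  · rintro ⟨t, rfl⟩
    -- Natural subtraction in `m - r` does not truncate, because `r < m`.
    have hx : r * t + (m - r) * t = m * t := by
      rw [← add_mul, Nat.add_sub_cancel' hrm_lt.le]
    refine ⟨(m - r) * t, ⟨t, hx⟩, ?_⟩
    have hxQ : ((r * t : ℕ) : ℚ) + (((m - r) * t : ℕ) : ℚ) = m * t := by exact_mod_cast hx
    rw [hxQ]
    push_cast
    field_simp
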